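/- Let d ≥ 2 and let S^b, S^a ∈ ℝ^d satisfy 0 < S^{b,i} ≤ S^{a,i} for i = 2,…,d and S^{b,1} = S^{a,1} = 1. Let K be the closed convex cone in ℝ^d generated by the vectors e_i − S^{b,i} e_1 (i=2,…,d), S^{a,j} e_1 − e_j (j=2,…,d), and e_1,…,e_d. Then the relative interior of the dual cone satisfies ri K* = {w ∈ ℝ^d : w_i > 0 for all i, and w_i/w_1 ∈ ri [S^{b,i}, S^{a,i}] for i = 2,…,d}; equivalently, ri K* = Ĥ(ri C), where C = [S^{b,2},S^{a,2}] × … × [S^{b,d},S^{a,d}] ⊆ ℝ^{d−1} and Ĥ(ri C) = {(w_1, ŵ) : w_1 > 0, ŵ ∈ w_1 · ri C}. -/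

import Mathlib

open Set Pointwise

/-- The smallest closed convex cone containing a set `S ⊆ ℝ^n`. -/
def generatedClosedCone {n : ℕ} (S : Set (Fin n → ℝ)) : Set (Fin n → ℝ) :=
  ⋂₀ {C | S ⊆ C ∧ IsClosed C ∧ Convex ℝ C ∧ ∀ x ∈ C, ∀ c : ℝ, 0 ≤ c → c • x ∈ C}

/-- The dual cone of `K ⊆ ℝ^n`. -/
def dualCone' {n : ℕ} (K : Set (Fin n → ℝ)) : Set (Fin n → ℝ) :=
  {w | ∀ x ∈ K, 0 ≤ ∑ i, x i * w i}

/-!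
The dual of a closed convex cone is cut out by its generators, so `K*` consists of the `w` with
`w 0 ≥ 0` whose remaining coordinates lie in `w 0 • C`: it is the cone over the box `C`. The
relative interior of the cone over a set `A` is the open cone over `ri A`: its height is positive
because the height functional is nonnegative on the cone and positive somewhere on it, and at
positive height `(c, y) ↦ c⁻¹ • y` is continuous and carries the affine span of the cone into that
of `A`. Finally, relative interiors commute with finite products.
-/

open Filter Topology

section IntrinsicInterior

variable {𝕜 V W P Q : Type*} [Ring 𝕜]
  [AddCommGroup V] [Module 𝕜 V] [AddTorsor V P] [AddCommGroup W] [Module 𝕜 W] [AddTorsor W Q]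

theorem mapsTo_affineSpan_preimage (f : P →ᵃ[𝕜] Q) (t : Set Q) :
    MapsTo f (affineSpan 𝕜 (f ⁻¹' t)) (affineSpan 𝕜 t) :=
  show affineSpan 𝕜 (f ⁻¹' t) ≤ (affineSpan 𝕜 t).comap f from
    affineSpan_le.2 (preimage_mono (subset_affineSpan 𝕜 t))

variable [TopologicalSpace P] [TopologicalSpace Q]

theorem mem_intrinsicInterior_iff_mem_nhdsWithin {s : Set P} {x : P} :
    x ∈ intrinsicInterior 𝕜 s ↔ x ∈ s ∧ s ∈ 𝓝[affineSpan 𝕜 s] x := by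
  constructor
  · intro hx
    refine ⟨intrinsicInterior_subset hx, ?_⟩
    obtain ⟨y, hy, rfl⟩ := hx
    exact preimage_coe_mem_nhds_subtype.1 (mem_interior_iff_mem_nhds.1 hy)
  · rintro ⟨hxs, hs⟩
    exact ⟨⟨x, subset_affineSpan 𝕜 s hxs⟩,
      mem_interior_iff_mem_nhds.2 (preimage_coe_mem_nhds_subtype.2 hs), rfl⟩

theorem preimage_intrinsicInterior_subset (f : P →ᴬ[𝕜] Q) (t : Set Q) :
    f ⁻¹' intrinsicInterior 𝕜 t ⊆ intrinsicInterior 𝕜 (f ⁻¹' t) := by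
  intro x hx
  obtain ⟨hxt, ht⟩ := mem_intrinsicInterior_iff_mem_nhdsWithin.1 hx
  have hf : Tendsto f (𝓝[affineSpan 𝕜 (f ⁻¹' t)] x) (𝓝[affineSpan 𝕜 t] (f x)) :=
    f.continuous.continuousWithinAt.tendsto_nhdsWithin
      (mapsTo_affineSpan_preimage (f : P →ᵃ[𝕜] Q) t)
  exact mem_intrinsicInterior_iff_mem_nhdsWithin.2 ⟨hxt, hf ht⟩

end IntrinsicInterior

section Pi

variable {𝕜 ι : Type*} {V P : ι → Type*} [Ring 𝕜]
  [∀ i, AddCommGroup (V i)] [∀ i, Module 𝕜 (V i)]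
  [∀ i, AddTorsor (V i) (P i)]

theorem affineSpan_pi_subset (s : ∀ i, Set (P i)) :
    (affineSpan 𝕜 (univ.pi s) : Set (∀ i, P i)) ⊆ univ.pi fun i => affineSpan 𝕜 (s i) := by
  intro x hx i _
  have hs : univ.pi s ⊆ (affineSpan 𝕜 (s i)).comap (AffineMap.proj i) := fun y hy =>
    subset_affineSpan 𝕜 (s i) (hy i (mem_univ i))
  exact affineSpan_le.2 hs hx

variable [∀ i, TopologicalSpace (P i)]

/-- The affine embedding `y ↦ Function.update x i y` of a factor of a product of affine spaces as
the coordinate slice through `x`. -/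
def updateContinuousAffineMap (𝕜 : Type*) [Ring 𝕜] [∀ i, Module 𝕜 (V i)] [DecidableEq ι]
    (x : ∀ i, P i) (i : ι) : P i →ᴬ[𝕜] ∀ i, P i where
  toFun := Function.update x i
  linear := LinearMap.single 𝕜 V i
  map_vadd' y v := by
    ext j
    obtain rfl | hj := eq_or_ne j i <;> simp [*]
  cont := continuous_const.update i continuous_id

theorem intrinsicInterior_pi [Finite ι] (s : ∀ i, Set (P i)) :
    intrinsicInterior 𝕜 (univ.pi s) = univ.pi fun i => intrinsicInterior 𝕜 (s i) := by
  classical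
  refine Subset.antisymm (fun x hx i _ => ?_) (fun x hx => ?_)
  · have hslice : updateContinuousAffineMap 𝕜 x i ⁻¹' univ.pi s = s i :=
      update_preimage_univ_pi fun j _ => intrinsicInterior_subset hx j (mem_univ j)
    have hx' : updateContinuousAffineMap 𝕜 x i (x i) ∈ intrinsicInterior 𝕜 (univ.pi s) := by
      rwa [show updateContinuousAffineMap 𝕜 x i (x i) = x from Function.update_eq_self i x]
    have hxi := preimage_intrinsicInterior_subset _ _ hx'
    rwa [hslice] at hxi
  · simp only [mem_univ_pi, mem_intrinsicInterior_iff_mem_nhdsWithin] at hx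
    have hs : univ.pi s ∈ 𝓝[univ.pi fun i => affineSpan 𝕜 (s i)] x := by
      rw [nhdsWithin_pi_univ_eq]
      exact pi_mem_pi finite_univ fun i _ => (hx i).2
    exact mem_intrinsicInterior_iff_mem_nhdsWithin.2
      ⟨fun i _ => (hx i).1, nhdsWithin_mono x (affineSpan_pi_subset s) hs⟩

end Pi

section Cone

variable {𝕜 E : Type*} [Field 𝕜] [LinearOrder 𝕜] [AddCommGroup E] [Module 𝕜 E]

/-- The cone `{(c, c • x) | c ≥ 0, x ∈ A}` over `A`, with `A` placed at height `1`. For nonempty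
`A` it is the union of `Ĥ(A)` and the origin. -/
def coneOver (𝕜 : Type*) [Field 𝕜] [LinearOrder 𝕜] [Module 𝕜 E] (A : Set E) : Set (𝕜 × E) :=
  {p | 0 ≤ p.1 ∧ p.2 ∈ p.1 • A}

theorem mem_coneOver_iff_inv_smul_mem {A : Set E} {p : 𝕜 × E} (hp : 0 < p.1) :
    p ∈ coneOver 𝕜 A ↔ p.1⁻¹ • p.2 ∈ A := by
  rw [← mem_smul_set_iff_inv_smul_mem₀ hp.ne']
  exact and_iff_right hp.le

theorem inv_smul_mem_affineSpan_of_mem_affineSpan_coneOver {A : Set E} {p : 𝕜 × E}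
    (hA : A.Nonempty) (hp : p ∈ affineSpan 𝕜 (coneOver 𝕜 A)) (hp₁ : p.1 ≠ 0) :
    p.1⁻¹ • p.2 ∈ affineSpan 𝕜 A := by
  obtain ⟨a, ha⟩ := hA
  let shear : 𝕜 × E →ₗ[𝕜] E := LinearMap.snd 𝕜 𝕜 E - (LinearMap.fst 𝕜 𝕜 E).smulRight a
  let D := (affineSpan 𝕜 A).direction
  have hcone : coneOver 𝕜 A ⊆ (D.comap shear).toAffineSubspace := by
    rintro ⟨c, _⟩ ⟨-, b, hb, rfl : c • b = _⟩
    have hab : b - a ∈ D := AffineSubspace.vsub_mem_direction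
      (subset_affineSpan 𝕜 A hb) (subset_affineSpan 𝕜 A ha)
    simpa [shear, smul_sub] using D.smul_mem c hab
  have hshear : p.2 - p.1 • a ∈ D := affineSpan_le.2 hcone hp
  have hdecomp : p.1⁻¹ • p.2 = p.1⁻¹ • (p.2 - p.1 • a) +ᵥ a := by
    rw [smul_sub, inv_smul_smul₀ hp₁, vadd_eq_add, sub_add_cancel]
  rw [hdecomp]
  exact AffineSubspace.vadd_mem_of_mem_direction (D.smul_mem _ hshear)
    (subset_affineSpan 𝕜 A ha)

variable [IsStrictOrderedRing 𝕜] [TopologicalSpace 𝕜] [OrderTopology 𝕜]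

theorem pos_of_mem_intrinsicInterior_of_nonneg {V P : Type*} [AddCommGroup V] [Module 𝕜 V]
    [TopologicalSpace V] [ContinuousSMul 𝕜 V] [TopologicalSpace P] [AddTorsor V P]
    [IsTopologicalAddTorsor P] {s : Set P} {x y : P} (f : P →ᵃ[𝕜] 𝕜)
    (hx : x ∈ intrinsicInterior 𝕜 s) (hf : ∀ z ∈ s, 0 ≤ f z) (hy : y ∈ s) (hfy : 0 < f y) :
    0 < f x := by
  obtain ⟨hxs, hs⟩ := mem_intrinsicInterior_iff_mem_nhdsWithin.1 hx
  refine (hf x hxs).lt_of_ne' fun hfx => ?_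
  have hline : Tendsto (AffineMap.lineMap x y) (𝓝 (0 : 𝕜)) (𝓝[affineSpan 𝕜 s] x) := by
    refine tendsto_nhdsWithin_iff.2 ⟨?_, Eventually.of_forall fun t => ?_⟩
    · simpa using (AffineMap.lineMap_continuous (R := 𝕜) (p := x) (q := y)).tendsto 0
    · exact AffineMap.lineMap_mem t (subset_affineSpan 𝕜 s hxs) (subset_affineSpan 𝕜 s hy)
  have hnonneg : ∀ᶠ t in 𝓝 (0 : 𝕜), 0 ≤ t := by
    filter_upwards [hline hs] with t ht
    have := hf _ ht
    rw [f.apply_lineMap, hfx] at this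
    exact nonneg_of_mul_nonneg_left (by simpa [AffineMap.lineMap_apply] using this) hfy
  obtain ⟨t, ht, ht'⟩ := ((hnonneg.filter_mono nhdsWithin_le_nhds).and
    (self_mem_nhdsWithin : Iio (0 : 𝕜) ∈ 𝓝[<] 0)).exists
  exact ht.not_gt ht'

variable [TopologicalSpace E] [ContinuousSMul 𝕜 E]

theorem mem_intrinsicInterior_coneOver_iff_inv_smul_mem {A : Set E} {p : 𝕜 × E} (hp₁ : 0 < p.1) :
    p ∈ intrinsicInterior 𝕜 (coneOver 𝕜 A) ↔ p.1⁻¹ • p.2 ∈ intrinsicInterior 𝕜 A := by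
  constructor
  · intro hp
    let slice : E →ᴬ[𝕜] 𝕜 × E :=
      (ContinuousAffineMap.const 𝕜 E p.1).prod (p.1 • ContinuousAffineMap.id 𝕜 E)
    have hslice : slice ⁻¹' coneOver 𝕜 A = A := by
      ext x
      simp [slice, mem_coneOver_iff_inv_smul_mem, hp₁, hp₁.ne']
    rw [← hslice]
    refine preimage_intrinsicInterior_subset slice _ ?_
    simpa [slice, hp₁.ne'] using hp
  · intro hx
    obtain ⟨hxA, hA⟩ := mem_intrinsicInterior_iff_mem_nhdsWithin.1 hx
    have hpos : ∀ᶠ q in 𝓝[affineSpan 𝕜 (coneOver 𝕜 A)] p, 0 < q.1 :=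
      nhdsWithin_le_nhds (continuous_fst.continuousAt.eventually_const_lt hp₁)
    have hproj : Tendsto (fun q : 𝕜 × E => q.1⁻¹ • q.2) (𝓝[affineSpan 𝕜 (coneOver 𝕜 A)] p)
        (𝓝[affineSpan 𝕜 A] (p.1⁻¹ • p.2)) := by
      refine tendsto_nhdsWithin_iff.2 ⟨?_, ?_⟩
      · exact ((continuousAt_fst.inv₀ hp₁.ne').smul continuousAt_snd).continuousWithinAt
      · filter_upwards [hpos, self_mem_nhdsWithin] with q hq₁ hq
        exact inv_smul_mem_affineSpan_of_mem_affineSpan_coneOver ⟨_, hxA⟩ hq hq₁.ne'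
    refine mem_intrinsicInterior_iff_mem_nhdsWithin.2
      ⟨(mem_coneOver_iff_inv_smul_mem hp₁).2 hxA, ?_⟩
    filter_upwards [hpos, hproj hA] with q hq₁ hq
    exact (mem_coneOver_iff_inv_smul_mem hq₁).2 hq

variable [IsTopologicalAddGroup E]

theorem fst_pos_of_mem_intrinsicInterior_coneOver {A : Set E} {p : 𝕜 × E}
    (hp : p ∈ intrinsicInterior 𝕜 (coneOver 𝕜 A)) : 0 < p.1 := by
  obtain ⟨-, a, ha, -⟩ := intrinsicInterior_subset hp
  have haA : ((1 : 𝕜), a) ∈ coneOver 𝕜 A := ⟨zero_le_one, by rwa [one_smul]⟩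
  exact pos_of_mem_intrinsicInterior_of_nonneg (LinearMap.fst 𝕜 𝕜 E).toAffineMap hp
    (fun _ hq => hq.1) haA zero_lt_one

theorem mem_intrinsicInterior_coneOver {A : Set E} {p : 𝕜 × E} :
    p ∈ intrinsicInterior 𝕜 (coneOver 𝕜 A) ↔ 0 < p.1 ∧ p.2 ∈ p.1 • intrinsicInterior 𝕜 A := by
  rw [← and_iff_right_of_imp (fst_pos_of_mem_intrinsicInterior_coneOver (A := A))]
  refine and_congr_right fun hp₁ => ?_
  rw [mem_intrinsicInterior_coneOver_iff_inv_smul_mem hp₁,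
    mem_smul_set_iff_inv_smul_mem₀ hp₁.ne']

end Cone

theorem smul_Icc_of_nonneg {𝕜 E : Type*} [Field 𝕜] [LinearOrder 𝕜] [IsStrictOrderedRing 𝕜]
    [AddCommGroup E] [PartialOrder E] [Module 𝕜 E] [PosSMulMono 𝕜 E]
    {c : 𝕜} {a b : E} (hc : 0 ≤ c) (hab : a ≤ b) : c • Icc a b = Icc (c • a) (c • b) := by
  obtain rfl | hc := hc.eq_or_lt
  · simp [zero_smul_set (nonempty_Icc.2 hab), singleton_zero]
  · exact (OrderIso.smulRight hc).image_Icc a b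

theorem mem_smul_univ_pi_iff_div_mem {𝕜 ι : Type*} [Field 𝕜] {c : 𝕜} (hc : c ≠ 0)
    {s : ι → Set 𝕜} {x : ι → 𝕜} : x ∈ c • univ.pi s ↔ ∀ i, x i / c ∈ s i := by
  simp [mem_smul_set_iff_inv_smul_mem₀ hc, div_eq_inv_mul]

section DualCone

theorem dualCone'_generatedClosedCone {n : ℕ} (S : Set (Fin n → ℝ)) :
    dualCone' (generatedClosedCone S) = dualCone' S := by
  refine Subset.antisymm (fun w hw x hx => hw x fun C hC => hC.1 hx) fun w hw x hx => ?_
  refine hx {x | 0 ≤ x ⬝ᵥ w} ⟨hw, ?_, ?_, fun y hy c hc => ?_⟩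
  · exact isClosed_le continuous_const (by fun_prop)
  · exact convex_halfSpace_ge ⟨fun y z => add_dotProduct y z w, fun c y => smul_dotProduct c y w⟩ 0
  · rw [mem_ofPred_eq, smul_dotProduct]
    exact smul_nonneg hc hy

variable {d : ℕ}

/-- The generators of the solvency cone of the bank account model with bid prices `b` and ask
prices `a` for the assets other than the bank account, which is asset `0`. -/
def solvencyGenerators (b a : Fin d → ℝ) : Set (Fin (d + 1) → ℝ) :=
  (range fun i : Fin d => Pi.single i.succ 1 - b i • Pi.single 0 1) ∪
    (range fun j : Fin d => a j • Pi.single 0 1 - Pi.single j.succ 1) ∪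
    (range fun i : Fin (d + 1) => Pi.single i 1)

theorem mem_dualCone'_solvencyGenerators {b a : Fin d → ℝ} {w : Fin (d + 1) → ℝ} :
    w ∈ dualCone' (solvencyGenerators b a) ↔
      (∀ i, 0 ≤ w i) ∧ Fin.tail w ∈ Icc (w 0 • b) (w 0 • a) := by
  change (∀ x ∈ solvencyGenerators b a, 0 ≤ x ⬝ᵥ w) ↔ _
  simp only [solvencyGenerators, mem_union, or_imp, forall_and, forall_mem_range, sub_dotProduct,
    smul_dotProduct, single_one_dotProduct, sub_nonneg, smul_eq_mul, mem_Icc, Pi.le_def,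
    Pi.smul_apply, Fin.tail, mul_comm (w 0)]
  exact and_comm

theorem dualCone'_solvencyGenerators {b a : Fin d → ℝ} (hb : 0 ≤ b) (hba : b ≤ a) :
    dualCone' (solvencyGenerators b a) =
      Fin.consEquivL ℝ (fun _ => ℝ) '' coneOver ℝ (Icc b a) := by
  ext w
  have hw : (Fin.consEquivL ℝ fun _ => ℝ).symm w = (w 0, Fin.tail w) := rfl
  rw [ContinuousLinearEquiv.image_eq_preimage_symm, mem_preimage, hw,
    mem_dualCone'_solvencyGenerators]
  refine ⟨fun ⟨hw_nonneg, h⟩ => ⟨hw_nonneg 0, ?_⟩, fun ⟨hw₀, h⟩ => ?_⟩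
  · rwa [smul_Icc_of_nonneg (hw_nonneg 0) hba]
  · rw [smul_Icc_of_nonneg hw₀ hba] at h
    exact ⟨Fin.cases hw₀ fun i => (smul_nonneg hw₀ hb i).trans (h.1 i), h⟩

theorem mem_intrinsicInterior_dualCone'_solvencyGenerators {b a : Fin d → ℝ} (hb : 0 ≤ b)
    (hba : b ≤ a) {w : Fin (d + 1) → ℝ} :
    w ∈ intrinsicInterior ℝ (dualCone' (solvencyGenerators b a)) ↔
      0 < w 0 ∧ Fin.tail w ∈ w 0 • univ.pi fun i => intrinsicInterior ℝ (Icc (b i) (a i)) := by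
  let e := Fin.consEquivL ℝ fun _ : Fin (d + 1) => ℝ
  have hri : intrinsicInterior ℝ (e '' coneOver ℝ (Icc b a)) =
      e '' intrinsicInterior ℝ (coneOver ℝ (Icc b a)) :=
    ContinuousAffineEquiv.intrinsicInterior_image e.toContinuousAffineEquiv _
  rw [dualCone'_solvencyGenerators hb hba, hri, e.image_eq_preimage_symm, mem_preimage,
    mem_intrinsicInterior_coneOver, ← pi_univ_Icc, intrinsicInterior_pi]
  rfl

end DualCone

/-- In the market model with a bank account (asset `0`; the other `d` assets are
indexed by `i.succ`, `i : Fin d`, so there are `d + 1 ≥ 2` assets), with bid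
prices `Sb` and ask prices `Sa` (`Sb 0 = Sa 0 = 1`, `0 < Sb ≤ Sa`), the relative
interior of the dual of the solvency cone `K` is
`ri K* = {w : w > 0, w_i / w_0 ∈ ri [Sb^i, Sa^i]}`; equivalently
`ri K* = Ĥ(ri C)` where `ri C` is the product of the relative interiors of the
bid-ask intervals and `Ĥ(ri C) = {(w_0, ŵ) : w_0 > 0, ŵ ∈ w_0 • ri C}`. -/
theorem bank_account_relint_dual_solvency_cone {d : ℕ} (hd : 1 ≤ d)
    (Sb Sa : Fin (d + 1) → ℝ)
    (hb0 : Sb 0 = 1) (ha0 : Sa 0 = 1)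
    (hpos : ∀ i : Fin d, 0 < Sb i.succ)
    (hba : ∀ i : Fin d, Sb i.succ ≤ Sa i.succ) :
    let K : Set (Fin (d + 1) → ℝ) := generatedClosedCone
      ((Set.range fun i : Fin d =>
          (Pi.single i.succ 1 : Fin (d + 1) → ℝ) - Sb i.succ • (Pi.single 0 1 : Fin (d + 1) → ℝ)) ∪
        (Set.range fun j : Fin d =>
          Sa j.succ • (Pi.single 0 1 : Fin (d + 1) → ℝ) - Pi.single j.succ 1) ∪
        (Set.range fun i : Fin (d + 1) => (Pi.single i 1 : Fin (d + 1) → ℝ)))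
    let riC : Set (Fin d → ℝ) :=
      {x | ∀ i, x i ∈ intrinsicInterior ℝ (Icc (Sb i.succ) (Sa i.succ))}
    intrinsicInterior ℝ (dualCone' K) =
        {w | (∀ i, 0 < w i) ∧
          ∀ i : Fin d, w i.succ / w 0 ∈
            intrinsicInterior ℝ (Icc (Sb i.succ) (Sa i.succ))} ∧
      intrinsicInterior ℝ (dualCone' K) =
        {w | 0 < w 0 ∧ (fun i : Fin d => w i.succ) ∈ w 0 • riC} := by
  intro K riC
  have hriC : riC = univ.pi fun i : Fin d =>
      intrinsicInterior ℝ (Icc (Sb i.succ) (Sa i.succ)) := by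
    ext x
    simp [riC]
  have hri : intrinsicInterior ℝ (dualCone' K) =
      {w | 0 < w 0 ∧ (fun i : Fin d => w i.succ) ∈ w 0 • riC} := by
    ext w
    have hK : dualCone' K = dualCone' (solvencyGenerators (Fin.tail Sb) (Fin.tail Sa)) :=
      dualCone'_generatedClosedCone _
    rw [hK, hriC]
    exact mem_intrinsicInterior_dualCone'_solvencyGenerators (fun i => (hpos i).le) hba
  refine ⟨?_, hri⟩
  ext w
  rw [hri, hriC]
  constructor
  · rintro ⟨hw₀, hw⟩
    rw [mem_smul_univ_pi_iff_div_mem hw₀.ne'] at hw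
    have hratio : ∀ i : Fin d, 0 < w i.succ / w 0 := fun i =>
      (hpos i).trans_le (intrinsicInterior_subset (hw i)).1
    exact ⟨Fin.cases hw₀ fun i => (div_pos_iff_of_pos_right hw₀).1 (hratio i), hw⟩
  · rintro ⟨hw_pos, hw⟩
    exact ⟨hw_pos 0, (mem_smul_univ_pi_iff_div_mem (hw_pos 0).ne').2 hw⟩
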